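/- arXiv:1410.6856 — 2 statements merged into one kernel-verified Lean document; each statement's English description precedes it below -/
import Mathlib

section
/- For every real number k ≥ 2 there exists a constant N such that for every integer n > N there exist two distinct primes p and q with ((k-1)/k)·n < p < (k/(k-1))·n and ((k-1)/k)·n < q < (k/(k-1))·n. -/
/-!
The argument is the Wiener-Ikehara method for short intervals. Let `f ≥ 0` have a Dirichlet series
with `∑ f n * n ^ (-s) - A / (s - 1)` extending continuously to `1 ≤ re s`, and put a Fejér kernel
`K` of bandwidth `T` around `y` on the logarithmic scale. Since `K` is the Fourier transform of a
tent supported in `[-T, T]`, the difference between `∑ f n * n ^ (-σ) * K (log n - y)` and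
`A * ∑ n ^ (-σ) * K (log n - y)` is an integral over `[-T, T]` of a function which stays continuous
as `σ → 1`, and by Riemann-Lebesgue it is small for large `y`. The second sum is bounded below, so
the first is too; by a Chebyshev bound `∑ n ≤ N, f n ≤ C * N`, the terms with `|log n - y| ≥ δ`
contribute only `O(1 / T)` to it. Hence for a large fixed `T` the interval
`(exp (y - δ), exp (y + δ)]` carries `f`-mass at least a constant multiple of `exp y`. For `f = Λ`
the prime powers are negligible, so the number of primes in `(a * x, b * x]` tends to infinity
whenever `0 < a < b`.
-/

open Asymptotics Complex Filter MeasureTheory Set Topology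
open scoped ArithmeticFunction.vonMangoldt Chebyshev Finset

/-- The Fejér kernel on the real line with frequencies in `[-T, T]`, i.e. the Fourier transform of
the tent `t ↦ 1 - |t| / T`. Its total mass is `2π`, so it is not normalised. -/
noncomputable def fejerKernel (T u : ℝ) : ℝ :=
  T * Real.sinc (T * u / 2) ^ 2

section FejerKernel

variable {T : ℝ}

lemma fejerKernel_nonneg (hT : 0 ≤ T) (u : ℝ) : 0 ≤ fejerKernel T u := by
  unfold fejerKernel
  positivity

lemma fejerKernel_le (hT : 0 ≤ T) (u : ℝ) : fejerKernel T u ≤ T :=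
  mul_le_of_le_one_right hT ((sq_le_one_iff_abs_le_one _).mpr (Real.abs_sinc_le_one _))

lemma two_div_pi_le_abs_sinc {x : ℝ} (hx : |x| ≤ Real.pi / 2) : 2 / Real.pi ≤ |Real.sinc x| := by
  rcases eq_or_ne x 0 with rfl | hx0
  · simpa using (div_le_one Real.pi_pos).mpr Real.two_le_pi
  · rw [Real.sinc_of_ne_zero hx0, abs_div, le_div_iff₀ (abs_pos.mpr hx0)]
    exact Real.mul_abs_le_abs_sin hx

lemma fejerKernel_of_ne_zero (hT : T ≠ 0) {u : ℝ} (hu : u ≠ 0) :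
    fejerKernel T u = 2 * (1 - Real.cos (T * u)) / (T * u ^ 2) := by
  rw [fejerKernel, Real.sinc_of_ne_zero (by positivity), div_pow, Real.sin_sq_eq_half_sub,
    mul_div_cancel₀ _ two_ne_zero]
  field

lemma quarter_le_fejerKernel {u : ℝ} (hT : 0 < T) (hu : |u| ≤ 1 / T) :
    T / 4 ≤ fejerKernel T u := by
  have hx : |T * u / 2| ≤ 1 / 2 := by
    rw [abs_div, abs_mul, abs_of_pos hT, abs_two]
    gcongr
    rwa [← le_div_iff₀' hT]
  have hsinc : 1 / 2 ≤ |Real.sinc (T * u / 2)| := by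
    refine le_trans ?_ (two_div_pi_le_abs_sinc (hx.trans (by linarith [Real.two_le_pi])))
    rw [div_le_div_iff₀ two_pos Real.pi_pos]
    linarith [Real.pi_le_four]
  calc T / 4 = T * (1 / 2) ^ 2 := by ring
    _ ≤ T * |Real.sinc (T * u / 2)| ^ 2 := by gcongr
    _ = fejerKernel T u := by rw [sq_abs, fejerKernel]

lemma fejerKernel_le_of_le_abs {δ u : ℝ} (hT : 0 < T) (hδ : 0 < δ) (hu : δ ≤ |u|) :
    fejerKernel T u ≤ 4 * (1 + 1 / δ ^ 2) / T / (1 + u ^ 2) := by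
  have hu0 : u ≠ 0 := abs_pos.mp (hδ.trans_le hu)
  have hδu : δ ^ 2 ≤ u ^ 2 := by
    rw [← sq_abs u]
    gcongr
  have hinv : 1 / u ^ 2 ≤ (1 + 1 / δ ^ 2) * (1 / (1 + u ^ 2)) := by
    rw [mul_one_div, div_le_div_iff₀ (by positivity) (by positivity), one_mul, add_mul, one_mul,
      add_comm, one_div_mul_eq_div]
    gcongr
    exact (one_le_div (by positivity)).mpr hδu
  calc fejerKernel T u = 2 * (1 - Real.cos (T * u)) / (T * u ^ 2) :=
        fejerKernel_of_ne_zero hT.ne' hu0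
    _ ≤ 2 * 2 / (T * u ^ 2) := by
        gcongr
        linarith [Real.neg_one_le_cos (T * u)]
    _ = 4 / T * (1 / u ^ 2) := by ring
    _ ≤ 4 / T * ((1 + 1 / δ ^ 2) * (1 / (1 + u ^ 2))) := by gcongr
    _ = 4 * (1 + 1 / δ ^ 2) / T / (1 + u ^ 2) := by ring

lemma integral_one_sub_div_mul_cos (hT : T ≠ 0) (u : ℝ) :
    ∫ t in 0..T, (1 - t / T) * (2 * Real.cos (t * u)) = fejerKernel T u := by
  have hint : IntervalIntegrable (fun t ↦ (1 - t / T) * (2 * Real.cos (t * u))) volume 0 T :=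
    Continuous.intervalIntegrable (by fun_prop) _ _
  rcases eq_or_ne u 0 with rfl | hu
  · have hderiv (t : ℝ) : HasDerivAt (fun t ↦ 2 * t - t ^ 2 / T)
        ((1 - t / T) * (2 * Real.cos (t * 0))) t := by
      convert! ((hasDerivAt_id t).const_mul 2).sub (((hasDerivAt_id t).pow 2).div_const T) using 1
      simp
      ring
    rw [intervalIntegral.integral_eq_sub_of_hasDerivAt (fun t _ ↦ hderiv t) hint]
    simp [fejerKernel]
    field
  · have hderiv (t : ℝ) : HasDerivAt
        (fun t ↦ (1 - t / T) * (2 * Real.sin (t * u) / u) - 2 * Real.cos (t * u) / (T * u ^ 2))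
        ((1 - t / T) * (2 * Real.cos (t * u))) t := by
      have hlin : HasDerivAt (fun t ↦ t * u) u t := by simpa using (hasDerivAt_id t).mul_const u
      have htent : HasDerivAt (fun t ↦ 1 - t / T) (-(1 / T)) t := by
        simpa using ((hasDerivAt_id t).div_const T).const_sub 1
      convert! (htent.mul ((hlin.sin.const_mul 2).div_const u)).sub
        ((hlin.cos.const_mul 2).div_const (T * u ^ 2)) using 1
      field
    rw [intervalIntegral.integral_eq_sub_of_hasDerivAt (fun t _ ↦ hderiv t) hint,
      fejerKernel_of_ne_zero hT hu]
    simp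
    field

lemma integral_one_sub_abs_div_mul_exp (hT : 0 < T) (u : ℝ) :
    ∫ t in -T..T, ((1 - |t| / T : ℝ) : ℂ) * exp ((t * u : ℝ) * I) = fejerKernel T u := by
  set F : ℝ → ℂ := fun t ↦ ((1 - |t| / T : ℝ) : ℂ) * exp ((t * u : ℝ) * I) with hF
  have hcont : Continuous F := by fun_prop
  have hcont_neg : Continuous fun t ↦ F (-t) := by fun_prop
  have hfold {t : ℝ} (ht : 0 ≤ t) :
      F (-t) + F t = ((1 - t / T) * (2 * Real.cos (t * u)) : ℝ) := by
    simp only [hF, abs_neg, abs_of_nonneg ht]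
    push_cast
    rw [two_cos]
    ring_nf
  calc ∫ t in -T..T, F t = (∫ t in -T..0, F t) + ∫ t in 0..T, F t :=
        (intervalIntegral.integral_add_adjacent_intervals (hcont.intervalIntegrable _ _)
          (hcont.intervalIntegrable _ _)).symm
    _ = ∫ t in 0..T, (F (-t) + F t) := by
        rw [intervalIntegral.integral_add (hcont_neg.intervalIntegrable _ _)
          (hcont.intervalIntegrable _ _), intervalIntegral.integral_comp_neg, neg_zero]
    _ = ∫ t in 0..T, (((1 - t / T) * (2 * Real.cos (t * u)) : ℝ) : ℂ) :=
        intervalIntegral.integral_congr fun t ht ↦ hfold (uIcc_of_le hT.le ▸ ht).1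
    _ = fejerKernel T u := by
        rw [intervalIntegral.integral_ofReal, integral_one_sub_div_mul_cos hT.ne']

end FejerKernel

/-- The Fourier integral at `y` of `G` against the tent `t ↦ 1 - |t| / T` on `[-T, T]`. It sends the
character `t ↦ exp (t * u * I)` to `fejerKernel T (u - y)`. -/
noncomputable def fejerTransform (T : ℝ) (G : ℝ → ℂ) (y : ℝ) : ℂ :=
  ∫ t in -T..T, ((1 - |t| / T : ℝ) : ℂ) * exp ((-(t * y) : ℝ) * I) * G t

section FejerTransform

variable {T : ℝ}

lemma norm_one_sub_abs_div_mul_exp_le (hT : 0 < T) {t : ℝ} (ht : t ∈ uIoc (-T) T) (x : ℝ) :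
    ‖((1 - |t| / T : ℝ) : ℂ) * exp (x * I)‖ ≤ 1 := by
  rw [uIoc_of_le (by linarith)] at ht
  have htT : |t| / T ≤ 1 := (div_le_one hT).mpr (abs_le.mpr ⟨ht.1.le, ht.2⟩)
  rw [norm_mul, norm_exp_ofReal_mul_I, mul_one, norm_real, Real.norm_of_nonneg (by linarith)]
  linarith [div_nonneg (abs_nonneg t) hT.le]

lemma fejerTransform_exp (hT : 0 < T) (u y : ℝ) :
    fejerTransform T (fun t ↦ exp ((t * u : ℝ) * I)) y = fejerKernel T (u - y) := by
  rw [fejerTransform, ← integral_one_sub_abs_div_mul_exp hT]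
  congr! 2 with t
  rw [mul_assoc, ← Complex.exp_add]
  push_cast
  ring_nf

lemma hasSum_mul_fejerKernel {ι : Type*} [Countable ι] (hT : 0 < T) {a : ι → ℂ}
    (ha : Summable fun i ↦ ‖a i‖) (u : ι → ℝ) (y : ℝ) :
    HasSum (fun i ↦ a i * fejerKernel T (u i - y))
      (fejerTransform T (fun t ↦ ∑' i, a i * exp ((t * u i : ℝ) * I)) y) := by
  have hterm (i : ι) : a i * fejerKernel T (u i - y) = ∫ t in -T..T,
      ((1 - |t| / T : ℝ) : ℂ) * exp ((-(t * y) : ℝ) * I) * (a i * exp ((t * u i : ℝ) * I)) := by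
    rw [← fejerTransform_exp hT, fejerTransform, ← intervalIntegral.integral_const_mul]
    congr! 2
    ring
  have hnorm (i : ι) (t : ℝ) : ‖a i * exp ((t * u i : ℝ) * I)‖ = ‖a i‖ := by
    rw [norm_mul, norm_exp_ofReal_mul_I, mul_one]
  have hsum (t : ℝ) : Summable fun i ↦ a i * exp ((t * u i : ℝ) * I) :=
    .of_norm (by simpa only [hnorm] using ha)
  simp_rw [hterm]
  refine intervalIntegral.hasSum_integral_of_dominated_convergence (fun i _ ↦ ‖a i‖)
    (fun i ↦ Continuous.aestronglyMeasurable (by fun_prop)) (fun i ↦ ae_of_all _ fun t ht ↦ ?_)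
    (ae_of_all _ fun _ _ ↦ ha) intervalIntegrable_const (ae_of_all _ fun t _ ↦ ?_)
  · rw [norm_mul, hnorm]
    exact mul_le_of_le_one_left (norm_nonneg _) (norm_one_sub_abs_div_mul_exp_le hT ht _)
  · exact (hsum t).hasSum.mul_left _

lemma tendsto_fejerTransform_atTop (hT : 0 ≤ T) (G : ℝ → ℂ) :
    Tendsto (fejerTransform T G) atTop (𝓝 0) := by
  have hscale : Tendsto (fun y : ℝ ↦ y / (2 * Real.pi)) atTop (cocompact ℝ) :=
    (tendsto_id.atTop_div_const (by positivity)).mono_right atTop_le_cocompact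
  refine ((Real.tendsto_integral_exp_smul_cocompact ((Ioc (-T) T).indicator
    fun t ↦ ((1 - |t| / T : ℝ) : ℂ) * G t)).comp hscale).congr fun y ↦ ?_
  rw [fejerTransform, intervalIntegral.integral_of_le (by linarith),
    ← integral_indicator measurableSet_Ioc]
  refine integral_congr_ae (ae_of_all _ fun t ↦ ?_)
  have harg : 2 * Real.pi * -(t * (y / (2 * Real.pi))) = -(t * y) := by field
  by_cases ht : t ∈ Ioc (-T) T
  · simp only [indicator_of_mem ht, Circle.smul_def, Real.fourierChar_apply, harg, smul_eq_mul]
    ring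
  · simp only [indicator_of_notMem ht, smul_zero]

lemma tendsto_fejerTransform_nhdsGT {H : ℂ → ℂ} {x₀ : ℝ} (hH : ContinuousOn H {s | x₀ ≤ s.re})
    (y : ℝ) :
    Tendsto (fun σ : ℝ ↦ fejerTransform T (fun t ↦ H (σ - t * I)) y) (𝓝[>] x₀)
      (𝓝 (fejerTransform T (fun t ↦ H (x₀ - t * I)) y)) := by
  -- Replacing `σ` by `max x₀ σ` keeps the argument of `H` in its half-plane of continuity.
  have hHcont : Continuous fun p : ℝ × ℝ ↦ H ((max x₀ p.1 : ℝ) - p.2 * I) :=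
    hH.comp_continuous (by fun_prop) fun p ↦ by simp
  have hcont : Continuous fun σ : ℝ ↦
      fejerTransform T (fun t ↦ H ((max x₀ σ : ℝ) - t * I)) y :=
    intervalIntegral.continuous_parametric_intervalIntegral_of_continuous'
      (f := fun σ t ↦ ((1 - |t| / T : ℝ) : ℂ) * exp ((-(t * y) : ℝ) * I) *
        H ((max x₀ σ : ℝ) - t * I)) (Continuous.mul (by fun_prop) hHcont) _ _
  have hlim := (hcont.tendsto x₀).mono_left (nhdsWithin_le_nhds (s := Ioi x₀))
  rw [max_self] at hlim
  refine hlim.congr' ?_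
  filter_upwards [self_mem_nhdsWithin] with σ hσ
  rw [max_eq_right (mem_Ioi.mp hσ).le]

end FejerTransform

section LSeries

variable {g : ℕ → ℂ} {T : ℝ}

lemma LSeries_term_sub_mul_I (g : ℕ → ℂ) (s : ℂ) (t : ℝ) (n : ℕ) :
    LSeries.term g (s - t * I) n = LSeries.term g s n * exp ((t * Real.log n : ℝ) * I) := by
  rcases eq_or_ne n 0 with rfl | hn
  · simp
  · rw [LSeries.term_of_ne_zero hn, LSeries.term_of_ne_zero hn, cpow_sub _ _ (by exact_mod_cast hn),
      div_div_eq_mul_div, mul_div_right_comm, cpow_def_of_ne_zero (by exact_mod_cast hn) (t * I),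
      ← natCast_log]
    push_cast
    ring_nf

lemma hasSum_term_mul_fejerKernel (hT : 0 < T) {s : ℂ} (hg : LSeriesSummable g s) (y : ℝ) :
    HasSum (fun n ↦ LSeries.term g s n * fejerKernel T (Real.log n - y))
      (fejerTransform T (fun t ↦ LSeries g (s - t * I)) y) := by
  simp only [LSeries, LSeries_term_sub_mul_I]
  exact hasSum_mul_fejerKernel hT hg.norm (fun n : ℕ ↦ Real.log n) y

lemma eventually_norm_tsum_term_mul_fejerKernel_lt (hT : 0 < T) {x₀ : ℝ} {H : ℂ → ℂ}
    (hg : ∀ s : ℂ, x₀ < s.re → LSeriesSummable g s) (hH : ContinuousOn H {s | x₀ ≤ s.re})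
    (hgH : ∀ s : ℂ, x₀ < s.re → LSeries g s = H s) {η : ℝ} (hη : 0 < η) :
    ∀ᶠ y in atTop, ∀ᶠ σ : ℝ in 𝓝[>] x₀,
      ‖∑' n, LSeries.term g σ n * fejerKernel T (Real.log n - y)‖ < η := by
  have hlim := (tendsto_fejerTransform_atTop hT.le fun t ↦ H (x₀ - t * I)).norm
  rw [norm_zero] at hlim
  filter_upwards [hlim.eventually_lt_const hη] with y hy
  filter_upwards [(tendsto_fejerTransform_nhdsGT hH y).norm.eventually_lt_const hy,
    self_mem_nhdsWithin] with σ hση hσ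
  have heq (t : ℝ) : LSeries g (σ - t * I) = H (σ - t * I) := hgH _ (by simpa using hσ)
  rw [(hasSum_term_mul_fejerKernel hT (hg σ hσ) y).tsum_eq]
  simpa only [heq] using hση

end LSeries

lemma summable_one_div_one_add_int_sq : Summable fun k : ℤ ↦ 1 / (1 + (k : ℝ) ^ 2) := by
  refine .of_norm_bounded_eventually (Real.summable_one_div_int_pow.mpr one_lt_two) ?_
  filter_upwards [(finite_singleton (0 : ℤ)).compl_mem_cofinite] with k hk
  have hk0 : (k : ℝ) ≠ 0 := Int.cast_ne_zero.mpr hk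
  rw [Real.norm_of_nonneg (by positivity)]
  gcongr
  linarith

lemma one_div_one_add_sub_sq_le (x y : ℝ) :
    1 / (1 + (x - y) ^ 2) ≤ 3 / (1 + ((⌊x⌋ - ⌊y⌋ : ℤ) : ℝ) ^ 2) := by
  have hfract : (Int.fract y - Int.fract x) ^ 2 ≤ 1 := by
    rw [sq_le_one_iff_abs_le_one, abs_le]
    constructor <;> linarith [Int.fract_nonneg x, Int.fract_lt_one x, Int.fract_nonneg y,
      Int.fract_lt_one y]
  have hfloor : ((⌊x⌋ - ⌊y⌋ : ℤ) : ℝ) = (x - y) + (Int.fract y - Int.fract x) := by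
    rw [Int.fract, Int.fract]
    push_cast
    ring
  rw [div_le_div_iff₀ (by positivity) (by positivity), hfloor]
  linarith [add_sq_le (a := x - y) (b := Int.fract y - Int.fract x), sq_nonneg (x - y)]

lemma sum_div_one_add_sq_le {ι : Type*} {s : Finset ι} {a u : ι → ℝ} {B : ℝ}
    (ha : ∀ i ∈ s, 0 ≤ a i) (hB : ∀ j : ℤ, ∑ i ∈ s with ⌊u i⌋ = j, a i ≤ B) (y : ℝ) :
    ∑ i ∈ s, a i / (1 + (u i - y) ^ 2) ≤ B * (3 * ∑' k : ℤ, 1 / (1 + (k : ℝ) ^ 2)) := by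
  set w : ℤ → ℝ := fun k ↦ 1 / (1 + (k : ℝ) ^ 2)
  set J := s.image fun i ↦ ⌊u i⌋
  have hB0 : 0 ≤ B :=
    (Finset.sum_nonneg fun i hi ↦ ha i (Finset.mem_of_mem_filter i hi)).trans (hB 0)
  calc ∑ i ∈ s, a i / (1 + (u i - y) ^ 2)
      ≤ ∑ i ∈ s, a i * (3 * w (⌊u i⌋ - ⌊y⌋)) := by
        refine Finset.sum_le_sum fun i hi ↦ ?_
        rw [div_eq_mul_one_div, mul_one_div 3]
        exact mul_le_mul_of_nonneg_left (one_div_one_add_sub_sq_le _ _) (ha i hi)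
    _ = ∑ j ∈ J, (∑ i ∈ s with ⌊u i⌋ = j, a i) * (3 * w (j - ⌊y⌋)) := by
        rw [← Finset.sum_fiberwise_of_maps_to fun i ↦ Finset.mem_image_of_mem fun i ↦ ⌊u i⌋]
        refine Finset.sum_congr rfl fun j _ ↦ ?_
        rw [Finset.sum_mul]
        exact Finset.sum_congr rfl fun i hi ↦ by rw [(Finset.mem_filter.mp hi).2]
    _ ≤ ∑ j ∈ J, B * (3 * w (j - ⌊y⌋)) := by
        gcongr with j
        exact hB j
    _ = B * (3 * ∑ j ∈ J, w (j - ⌊y⌋)) := by rw [Finset.mul_sum, Finset.mul_sum]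
    _ ≤ B * (3 * ∑' k, w k) := by
        gcongr
        rw [← (Equiv.subRight ⌊y⌋).tsum_eq w]
        exact ((Equiv.subRight ⌊y⌋).summable_iff.mpr summable_one_div_one_add_int_sq).sum_le_tsum _
          fun j _ ↦ by positivity

section ChebyshevBound

variable {f : ℕ → ℝ} {C σ : ℝ}

lemma sum_div_rpow_le_of_forall_mem_Icc (hf : ∀ n, 0 ≤ f n)
    (hfC : ∀ N : ℕ, ∑ n ∈ Finset.Icc 1 N, f n ≤ C * N) (hσ : 1 ≤ σ) {X r : ℝ} (hX : 0 < X)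
    (hr : 0 ≤ r) {s : Finset ℕ} (hs : ∀ n ∈ s, (n : ℝ) ∈ Icc X (r * X)) :
    ∑ n ∈ s, f n / n ^ σ ≤ C * r := by
  have hC : 0 ≤ C := (hf 1).trans (by simpa using hfC 1)
  have hone {n : ℕ} (hn : n ∈ s) : 1 ≤ n := Nat.cast_pos.mp (hX.trans_le (hs n hn).1)
  calc ∑ n ∈ s, f n / n ^ σ ≤ ∑ n ∈ s, f n / X := by
        refine Finset.sum_le_sum fun n hn ↦ ?_
        gcongr
        · exact hf n
        · exact (hs n hn).1.trans (Real.self_le_rpow_of_one_le (mod_cast hone hn) hσ)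
    _ = (∑ n ∈ s, f n) / X := (Finset.sum_div ..).symm
    _ ≤ (∑ n ∈ Finset.Icc 1 ⌊r * X⌋₊, f n) / X := by
        gcongr
        · exact fun _ _ _ ↦ hf _
        · exact fun n hn ↦ Finset.mem_Icc.mpr ⟨hone hn, Nat.le_floor (hs n hn).2⟩
    _ ≤ C * (r * X) / X := by
        gcongr
        exact (hfC _).trans (by gcongr; exact Nat.floor_le (by positivity))
    _ = C * r := by field

lemma exists_forall_sum_div_rpow_div_one_add_sq_le (hf : ∀ n, 0 ≤ f n)
    (hfC : ∀ N : ℕ, ∑ n ∈ Finset.Icc 1 N, f n ≤ C * N) :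
    ∃ K, ∀ σ ≥ (1 : ℝ), ∀ (y : ℝ) (s : Finset ℕ),
      ∑ n ∈ s, f n / n ^ σ / (1 + (Real.log n - y) ^ 2) ≤ K := by
  refine ⟨C * Real.exp 1 * (3 * ∑' k : ℤ, 1 / (1 + (k : ℝ) ^ 2)), fun σ hσ y s ↦ ?_⟩
  rw [← Finset.sum_erase s (a := 0) (by simp [Real.zero_rpow (by linarith : σ ≠ 0)])]
  refine sum_div_one_add_sq_le (fun n _ ↦ div_nonneg (hf n) (by positivity)) (fun j ↦ ?_) y
  refine sum_div_rpow_le_of_forall_mem_Icc hf hfC hσ (Real.exp_pos j) (Real.exp_pos 1).le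
    fun n hn ↦ ?_
  obtain ⟨hns, rfl⟩ := Finset.mem_filter.mp hn
  have hn0 : (0 : ℝ) < n := mod_cast Nat.pos_of_ne_zero (Finset.ne_of_mem_erase hns)
  rw [← Real.exp_add, add_comm]
  exact ⟨(Real.le_log_iff_exp_le hn0).mp (Int.floor_le _),
    (Real.log_le_iff_le_exp hn0).mp (Int.lt_floor_add_one _).le⟩

end ChebyshevBound

lemma mem_Ioc_floor_iff {a b : ℝ} (ha : 0 ≤ a) (hb : 0 ≤ b) {n : ℕ} :
    n ∈ Finset.Ioc ⌊a⌋₊ ⌊b⌋₊ ↔ (n : ℝ) ∈ Ioc a b := by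
  rw [Finset.mem_Ioc, Nat.floor_lt ha, Nat.le_floor_iff hb, mem_Ioc]

lemma mem_Ioc_floor_exp_iff {a b : ℝ} {n : ℕ} (hn : n ≠ 0) :
    n ∈ Finset.Ioc ⌊Real.exp a⌋₊ ⌊Real.exp b⌋₊ ↔ Real.log n ∈ Ioc a b := by
  have hn0 : (0 : ℝ) < n := mod_cast Nat.pos_of_ne_zero hn
  rw [mem_Ioc_floor_iff (Real.exp_pos a).le (Real.exp_pos b).le, mem_Ioc, mem_Ioc,
    Real.lt_log_iff_exp_lt hn0, Real.log_le_iff_le_exp hn0]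

section Integers

variable {T y : ℝ}

lemma exp_div_two_mul_le_card_Ioc_floor_exp (hT : 0 < T) (hy : 2 * T ≤ Real.exp y) :
    Real.exp y / (2 * T) ≤ #(Finset.Ioc ⌊Real.exp y⌋₊ ⌊Real.exp (y + 1 / T)⌋₊) := by
  have hle : ⌊Real.exp y⌋₊ ≤ ⌊Real.exp (y + 1 / T)⌋₊ := by
    gcongr
    linarith [one_div_pos.mpr hT]
  have hone : 1 ≤ Real.exp y / (2 * T) := (one_le_div (by positivity)).mpr hy
  have hexp : Real.exp y * (1 / T + 1) ≤ Real.exp (y + 1 / T) := by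
    rw [Real.exp_add]
    gcongr
    exact Real.add_one_le_exp _
  have hsplit : Real.exp y * (1 / T + 1) = 2 * (Real.exp y / (2 * T)) + Real.exp y := by field
  rw [Nat.card_Ioc, Nat.cast_sub hle]
  linarith [Nat.sub_one_lt_floor (Real.exp (y + 1 / T)), Nat.floor_le (Real.exp_pos y).le]

lemma one_div_lt_sum_one_div_mul_fejerKernel (hT : 1 ≤ T) (hy : 2 * T ≤ Real.exp y) :
    1 / 32 < ∑ n ∈ Finset.Ioc ⌊Real.exp y⌋₊ ⌊Real.exp (y + 1 / T)⌋₊,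
      1 / (n : ℝ) * fejerKernel T (Real.log n - y) := by
  have hT0 : 0 < T := by linarith
  have hterm (n : ℕ) (hn : n ∈ Finset.Ioc ⌊Real.exp y⌋₊ ⌊Real.exp (y + 1 / T)⌋₊) :
      1 / Real.exp (y + 1 / T) * (T / 4) ≤ 1 / (n : ℝ) * fejerKernel T (Real.log n - y) := by
    have hn0 : n ≠ 0 := Nat.ne_zero_of_lt (Finset.mem_Ioc.mp hn).1
    have hlog := (mem_Ioc_floor_exp_iff hn0).mp hn
    gcongr
    · exact ((mem_Ioc_floor_iff (Real.exp_pos _).le (Real.exp_pos _).le).mp hn).2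
    · refine quarter_le_fejerKernel hT0 ?_
      rw [abs_of_nonneg] <;> linarith [hlog.1, hlog.2]
  calc 1 / 32 < 1 / Real.exp 1 / 8 := by
        rw [div_div, one_div_lt_one_div (by norm_num) (by positivity)]
        linarith [Real.exp_one_lt_three]
    _ ≤ 1 / Real.exp (1 / T) / 8 := by
        gcongr
        exact (div_le_one hT0).mpr hT
    _ = Real.exp y / (2 * T) * (1 / Real.exp (y + 1 / T) * (T / 4)) := by
        rw [Real.exp_add]
        field
    _ ≤ _ := by
        refine le_trans ?_ (Finset.card_nsmul_le_sum _ _ _ hterm)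
        rw [nsmul_eq_mul]
        gcongr
        exact exp_div_two_mul_le_card_Ioc_floor_exp hT0 hy

end Integers

section DirichletSeries

variable {f : ℕ → ℝ} {T σ : ℝ}

lemma LSeriesSummable_of_sum_le {C : ℝ} (hf : ∀ n, 0 ≤ f n)
    (hfC : ∀ N : ℕ, ∑ n ∈ Finset.Icc 1 N, f n ≤ C * N) {s : ℂ} (hs : 1 < s.re) :
    LSeriesSummable (fun n ↦ (f n : ℂ)) s := by
  refine LSeriesSummable_of_sum_norm_bigO_and_nonneg (.of_bound C (.of_forall fun N ↦ ?_)) hf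
    zero_le_one hs
  rw [Real.rpow_one, Real.norm_of_nonneg (Finset.sum_nonneg fun n _ ↦ hf n), Real.norm_natCast]
  exact hfC N

lemma LSeries_term_ofReal (f : ℕ → ℝ) (hσ : σ ≠ 0) (n : ℕ) :
    LSeries.term (fun n ↦ (f n : ℂ)) σ n = (f n / n ^ σ : ℝ) := by
  rcases eq_or_ne n 0 with rfl | hn
  · simp [hσ]
  · rw [LSeries.term_of_ne_zero hn, ofReal_div, ofReal_cpow n.cast_nonneg, ofReal_natCast]

lemma summable_div_rpow_mul_fejerKernel (hT : 0 < T) (hσ : σ ≠ 0)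
    (hf : LSeriesSummable (fun n ↦ (f n : ℂ)) σ) (y : ℝ) :
    Summable fun n : ℕ ↦ f n / n ^ σ * fejerKernel T (Real.log n - y) := by
  have hsum := (hasSum_term_mul_fejerKernel hT hf y).summable
  simp only [LSeries_term_ofReal f hσ] at hsum
  exact_mod_cast hsum

lemma summable_one_div_rpow_mul_fejerKernel (hT : 0 < T) (hσ : 1 < σ) (y : ℝ) :
    Summable fun n : ℕ ↦ 1 / (n : ℝ) ^ σ * fejerKernel T (Real.log n - y) :=
  summable_div_rpow_mul_fejerKernel (f := fun _ ↦ 1) hT (by linarith)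
    (LSeriesSummable_of_sum_le (C := 1) (fun _ ↦ zero_le_one) (by simp) hσ) y

lemma eventually_one_div_lt_tsum_mul_fejerKernel (hT : 1 ≤ T) :
    ∀ᶠ y in atTop, ∀ᶠ σ : ℝ in 𝓝[>] 1,
      1 / 32 < ∑' n : ℕ, 1 / (n : ℝ) ^ σ * fejerKernel T (Real.log n - y) := by
  have hT0 : 0 < T := by linarith
  filter_upwards [Real.tendsto_exp_atTop.eventually_ge_atTop (2 * T)] with y hy
  set S := Finset.Ioc ⌊Real.exp y⌋₊ ⌊Real.exp (y + 1 / T)⌋₊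
  have hlim : Tendsto
      (fun σ : ℝ ↦ ∑ n ∈ S, 1 / (n : ℝ) ^ σ * fejerKernel T (Real.log n - y)) (𝓝[>] 1)
      (𝓝 (∑ n ∈ S, 1 / (n : ℝ) * fejerKernel T (Real.log n - y))) := by
    refine tendsto_finsetSum S fun n hn ↦ Tendsto.mul_const _ (Tendsto.div tendsto_const_nhds ?_ ?_)
    all_goals have hn0 : (n : ℝ) ≠ 0 := mod_cast Nat.ne_zero_of_lt (Finset.mem_Ioc.mp hn).1
    · simpa only [Real.rpow_one] using
        (Real.continuousAt_const_rpow (b := 1) hn0).tendsto.mono_left nhdsWithin_le_nhds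
    · exact hn0
  filter_upwards [hlim.eventually_const_lt (one_div_lt_sum_one_div_mul_fejerKernel hT hy),
    self_mem_nhdsWithin] with σ hsum hσ
  exact hsum.trans_le ((summable_one_div_rpow_mul_fejerKernel hT0 hσ y).sum_le_tsum S
    fun n _ ↦ mul_nonneg (by positivity) (fejerKernel_nonneg hT0.le _))

lemma exists_continuous_eq_riemannZeta_sub :
    ∃ Z : ℂ → ℂ, Continuous Z ∧ ∀ s ≠ 1, Z s = riemannZeta s - 1 / (s - 1) := by
  classical
  refine ⟨Function.update (fun s ↦ riemannZeta s - 1 / (s - 1)) 1 Real.eulerMascheroniConstant,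
    continuous_iff_continuousAt.mpr fun s ↦ ?_, fun s hs ↦ Function.update_of_ne hs ..⟩
  rcases eq_or_ne s 1 with rfl | hs
  · exact continuousAt_update_same.mpr tendsto_riemannZeta_sub_one_div
  · exact (continuousAt_update_of_ne hs).mpr ((differentiableAt_riemannZeta hs).continuousAt.sub
      (continuousAt_const.div (by fun_prop) (sub_ne_zero.mpr hs)))

end DirichletSeries

section WienerIkehara

variable {f : ℕ → ℝ} {A C : ℝ} {H : ℂ → ℂ}

lemma le_abs_log_sub_of_notMem {y δ : ℝ} {n : ℕ} (hn : n ≠ 0)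
    (hnmem : n ∉ Finset.Ioc ⌊Real.exp (y - δ)⌋₊ ⌊Real.exp (y + δ)⌋₊) : δ ≤ |Real.log n - y| := by
  contrapose! hnmem
  obtain ⟨hlo, hhi⟩ := abs_lt.mp hnmem
  exact (mem_Ioc_floor_exp_iff hn).mpr ⟨by linarith, by linarith⟩

lemma tsum_mul_fejerKernel_le (hf : ∀ n, 0 ≤ f n) {K T δ y σ : ℝ} (hT : 0 < T) (hδ : 0 < δ)
    (hσ : 1 ≤ σ) (hK : ∀ s : Finset ℕ, ∑ n ∈ s, f n / n ^ σ / (1 + (Real.log n - y) ^ 2) ≤ K) :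
    ∑' n : ℕ, f n / n ^ σ * fejerKernel T (Real.log n - y) ≤
      T / Real.exp (y - δ) *
          ∑ n ∈ Finset.Ioc ⌊Real.exp (y - δ)⌋₊ ⌊Real.exp (y + δ)⌋₊, f n +
        4 * (1 + 1 / δ ^ 2) * K / T := by
  set N := Finset.Ioc ⌊Real.exp (y - δ)⌋₊ ⌊Real.exp (y + δ)⌋₊
  have hfσ (n : ℕ) : 0 ≤ f n / n ^ σ := div_nonneg (hf n) (by positivity)
  have hnear (n : ℕ) (hn : n ∈ N) :
      f n / n ^ σ * fejerKernel T (Real.log n - y) ≤ T / Real.exp (y - δ) * f n := by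
    have hlt := ((mem_Ioc_floor_iff (Real.exp_pos _).le (Real.exp_pos _).le).mp hn).1
    have hone : (1 : ℝ) ≤ n := mod_cast (Finset.mem_Ioc.mp hn).1.pos
    calc f n / n ^ σ * fejerKernel T (Real.log n - y) ≤ f n / Real.exp (y - δ) * T := by
          gcongr
          · exact fejerKernel_nonneg hT.le _
          · exact div_nonneg (hf n) (Real.exp_pos _).le
          · exact hf n
          · exact hlt.le.trans (Real.self_le_rpow_of_one_le hone hσ)
          · exact fejerKernel_le hT.le _
      _ = T / Real.exp (y - δ) * f n := by ring
  have hfar (n : ℕ) (hn : n ∉ N) : f n / n ^ σ * fejerKernel T (Real.log n - y) ≤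
      4 * (1 + 1 / δ ^ 2) / T * (f n / n ^ σ / (1 + (Real.log n - y) ^ 2)) := by
    rcases eq_or_ne n 0 with rfl | hn0
    · simp [Real.zero_rpow (by linarith : σ ≠ 0)]
    have hdist := le_abs_log_sub_of_notMem hn0 hn
    refine (mul_le_mul_of_nonneg_left (fejerKernel_le_of_le_abs hT hδ hdist) (hfσ n)).trans_eq ?_
    ring
  refine Real.tsum_le_of_sum_le (fun n ↦ mul_nonneg (hfσ n) (fejerKernel_nonneg hT.le _))
    fun s ↦ ?_
  rw [← Finset.sum_filter_add_sum_filter_not s (· ∈ N), Finset.mul_sum, mul_div_right_comm]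
  gcongr
  · refine (Finset.sum_le_sum fun n hn ↦ hnear n (Finset.mem_filter.mp hn).2).trans ?_
    exact Finset.sum_le_sum_of_subset_of_nonneg (fun n hn ↦ (Finset.mem_filter.mp hn).2)
      fun n _ _ ↦ mul_nonneg (by positivity) (hf n)
  · refine (Finset.sum_le_sum fun n hn ↦ hfar n (Finset.mem_filter.mp hn).2).trans ?_
    rw [← Finset.mul_sum]
    gcongr
    exact hK _

lemma eventually_abs_tsum_sub_tsum_mul_fejerKernel_lt {T η : ℝ} (hT : 0 < T) (hη : 0 < η)
    (hf : ∀ s : ℂ, 1 < s.re → LSeriesSummable (fun n ↦ (f n : ℂ)) s)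
    (hH : ContinuousOn H {s | 1 ≤ s.re})
    (hfH : ∀ s : ℂ, 1 < s.re → LSeries (fun n ↦ (f n : ℂ)) s - A / (s - 1) = H s) :
    ∀ᶠ y in atTop, ∀ᶠ σ : ℝ in 𝓝[>] 1,
      |∑' n : ℕ, f n / n ^ σ * fejerKernel T (Real.log n - y) -
        A * ∑' n : ℕ, 1 / (n : ℝ) ^ σ * fejerKernel T (Real.log n - y)| < η := by
  obtain ⟨Z, hZ, hZeq⟩ := exists_continuous_eq_riemannZeta_sub
  set g : ℕ → ℂ := fun n ↦ ((f n - A : ℝ) : ℂ)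
  have hg : g = (fun n ↦ (f n : ℂ)) - (A : ℂ) • 1 := by ext n; simp [g]
  have hsum_one {s : ℂ} (hs : 1 < s.re) : LSeriesSummable 1 s := LSeriesSummable_one_iff.mpr hs
  have hsum (s : ℂ) (hs : 1 < s.re) : LSeriesSummable g s :=
    hg ▸ (hf s hs).sub ((hsum_one hs).smul _)
  have hLg (s : ℂ) (hs : 1 < s.re) : LSeries g s = H s - A * Z s := by
    have hs1 : s ≠ 1 := by rintro rfl; simp at hs
    rw [hg, LSeries_sub (hf s hs) ((hsum_one hs).smul _), LSeries_smul,
      LSeries_one_eq_riemannZeta hs, ← hfH s hs, hZeq s hs1]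
    ring
  filter_upwards [eventually_norm_tsum_term_mul_fejerKernel_lt hT hsum
    (hH.sub (hZ.continuousOn.const_smul (A : ℂ))) hLg hη] with y hy
  filter_upwards [hy, self_mem_nhdsWithin] with σ hσy hσ
  have hσ0 : σ ≠ 0 := by linarith [mem_Ioi.mp hσ]
  rw [← tsum_mul_left, ← Summable.tsum_sub (summable_div_rpow_mul_fejerKernel hT hσ0 (hf σ hσ) y)
    ((summable_one_div_rpow_mul_fejerKernel hT hσ y).mul_left A), ← Real.norm_eq_abs, ← norm_real,
    ofReal_tsum]
  convert! hσy using 3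
  ext n
  rw [LSeries_term_ofReal _ hσ0]
  push_cast
  ring

lemma eventually_le_tsum_mul_fejerKernel (hA : 0 < A)
    (hf : ∀ s : ℂ, 1 < s.re → LSeriesSummable (fun n ↦ (f n : ℂ)) s)
    (hH : ContinuousOn H {s | 1 ≤ s.re})
    (hfH : ∀ s : ℂ, 1 < s.re → LSeries (fun n ↦ (f n : ℂ)) s - A / (s - 1) = H s)
    {T : ℝ} (hT : 1 ≤ T) :
    ∀ᶠ y in atTop, ∀ᶠ σ : ℝ in 𝓝[>] 1,
      A / 64 ≤ ∑' n : ℕ, f n / n ^ σ * fejerKernel T (Real.log n - y) := by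
  filter_upwards [eventually_one_div_lt_tsum_mul_fejerKernel hT,
    eventually_abs_tsum_sub_tsum_mul_fejerKernel_lt (by linarith) (by linarith : 0 < A / 64)
      hf hH hfH] with y hone hdiff
  filter_upwards [hone, hdiff] with σ hσone hσdiff
  linarith [(abs_lt.mp hσdiff).1, mul_le_mul_of_nonneg_left hσone.le hA.le]

theorem exists_eventually_mul_exp_le_sum_Ioc (hA : 0 < A) (hf : ∀ n, 0 ≤ f n)
    (hfC : ∀ N : ℕ, ∑ n ∈ Finset.Icc 1 N, f n ≤ C * N) (hH : ContinuousOn H {s | 1 ≤ s.re})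
    (hfH : ∀ s : ℂ, 1 < s.re → LSeries (fun n ↦ (f n : ℂ)) s - A / (s - 1) = H s)
    {δ : ℝ} (hδ : 0 < δ) :
    ∃ c > 0, ∀ᶠ y in atTop, c * Real.exp y ≤
      ∑ n ∈ Finset.Ioc ⌊Real.exp (y - δ)⌋₊ ⌊Real.exp (y + δ)⌋₊, f n := by
  obtain ⟨K, hK⟩ := exists_forall_sum_div_rpow_div_one_add_sq_le hf hfC
  have hK0 : 0 ≤ K := by simpa using hK 1 le_rfl 0 ∅
  set D := 4 * (1 + 1 / δ ^ 2) * K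
  have hD0 : 0 ≤ D := by positivity
  -- For this `T` the far terms take up at most half of the lower bound `A / 64`.
  set T := 1 + 128 * D / A
  have hT1 : 1 ≤ T := le_add_of_nonneg_right (div_nonneg (mul_nonneg (by norm_num) hD0) hA.le)
  have hT0 : 0 < T := by linarith
  have hDT : D / T ≤ A / 128 := by
    rw [div_le_iff₀ hT0]
    have : A / 128 * T = A / 128 + D := by simp only [T]; field
    linarith
  refine ⟨A / (128 * T * Real.exp δ), by positivity, ?_⟩
  filter_upwards [eventually_le_tsum_mul_fejerKernel hA
    (fun s ↦ LSeriesSummable_of_sum_le hf hfC) hH hfH hT1] with y hy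
  obtain ⟨σ, hσA, hσ⟩ := (hy.and self_mem_nhdsWithin).exists
  have hupper := tsum_mul_fejerKernel_le hf hT0 hδ (mem_Ioi.mp hσ).le
    (hK σ (mem_Ioi.mp hσ).le y)
  set S := ∑ n ∈ Finset.Ioc ⌊Real.exp (y - δ)⌋₊ ⌊Real.exp (y + δ)⌋₊, f n
  have hS : A / 128 ≤ T / Real.exp (y - δ) * S := by linarith
  calc A / (128 * T * Real.exp δ) * Real.exp y = Real.exp (y - δ) / T * (A / 128) := by
        rw [Real.exp_sub]
        field
    _ ≤ Real.exp (y - δ) / T * (T / Real.exp (y - δ) * S) := by gcongr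
    _ = S := by field

theorem exists_eventually_mul_le_sum_Ioc (hA : 0 < A) (hf : ∀ n, 0 ≤ f n)
    (hfC : ∀ N : ℕ, ∑ n ∈ Finset.Icc 1 N, f n ≤ C * N) (hH : ContinuousOn H {s | 1 ≤ s.re})
    (hfH : ∀ s : ℂ, 1 < s.re → LSeries (fun n ↦ (f n : ℂ)) s - A / (s - 1) = H s)
    {a b : ℝ} (ha : 0 < a) (hab : a < b) :
    ∃ c > 0, ∀ᶠ x : ℝ in atTop, c * x ≤ ∑ n ∈ Finset.Ioc ⌊a * x⌋₊ ⌊b * x⌋₊, f n := by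
  have hb : 0 < b := ha.trans hab
  obtain ⟨c, hc, hev⟩ := exists_eventually_mul_exp_le_sum_Ioc hA hf hfC hH hfH
    (half_pos (sub_pos.mpr (Real.log_lt_log ha hab)))
  set m := (Real.log a + Real.log b) / 2
  refine ⟨c * Real.exp m, by positivity, ?_⟩
  have hlog : Tendsto (fun x ↦ m + Real.log x) atTop atTop :=
    tendsto_atTop_add_const_left _ _ Real.tendsto_log_atTop
  filter_upwards [hlog.eventually hev, eventually_gt_atTop 0] with x hx hx0
  have hlo : m + Real.log x - (Real.log b - Real.log a) / 2 = Real.log (a * x) := by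
    rw [Real.log_mul ha.ne' hx0.ne']
    ring
  have hhi : m + Real.log x + (Real.log b - Real.log a) / 2 = Real.log (b * x) := by
    rw [Real.log_mul hb.ne' hx0.ne']
    ring
  rwa [hlo, hhi, Real.exp_log (by positivity), Real.exp_log (by positivity), Real.exp_add,
    Real.exp_log hx0, ← mul_assoc] at hx

end WienerIkehara

section PrimesInIntervals

variable {a b : ℝ}

theorem exists_continuousOn_LSeries_vonMangoldt_sub :
    ∃ H : ℂ → ℂ, ContinuousOn H {s | 1 ≤ s.re} ∧
      ∀ s : ℂ, 1 < s.re → LSeries (fun n ↦ (Λ n : ℂ)) s - (1 : ℝ) / (s - 1) = H s := by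
  have hΛ : ArithmeticFunction.vonMangoldt.residueClass (1 : ZMod 1) = Λ := by
    ext n
    simp [ArithmeticFunction.vonMangoldt.residueClass, Subsingleton.elim (n : ZMod 1) 1]
  refine ⟨_, ArithmeticFunction.vonMangoldt.continuousOn_LFunctionResidueClassAux (1 : ZMod 1),
    fun s hs ↦ ?_⟩
  rw [ArithmeticFunction.vonMangoldt.eqOn_LFunctionResidueClassAux isUnit_one hs, hΛ]
  simp

theorem exists_eventually_mul_le_psi_sub_psi (ha : 0 < a) (hab : a < b) :
    ∃ c > 0, ∀ᶠ x : ℝ in atTop, c * x ≤ ψ (b * x) - ψ (a * x) := by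
  obtain ⟨H, hH, hΛH⟩ := exists_continuousOn_LSeries_vonMangoldt_sub
  have hΛ (N : ℕ) : ∑ n ∈ Finset.Icc 1 N, Λ n ≤ (Real.log 4 + 4) * N := by
    simpa [Chebyshev.psi, ← Finset.Icc_add_one_left_eq_Ioc] using
      Chebyshev.psi_le_const_mul_self N.cast_nonneg
  obtain ⟨c, hc, hev⟩ := exists_eventually_mul_le_sum_Ioc one_pos
    (fun n ↦ ArithmeticFunction.vonMangoldt_nonneg) hΛ hH hΛH ha hab
  refine ⟨c, hc, ?_⟩
  filter_upwards [hev, eventually_ge_atTop 0] with x hx hx0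
  have hle : ⌊a * x⌋₊ ≤ ⌊b * x⌋₊ := by gcongr
  rwa [Chebyshev.psi, Chebyshev.psi, ← Finset.sum_Ioc_consecutive _ (Nat.zero_le _) hle,
    add_sub_cancel_left]

theorem isLittleO_psi_sub_theta_id : (ψ - θ) =o[atTop] (id : ℝ → ℝ) := by
  refine Chebyshev.isBigO_psi_sub_theta_sqrt.trans_isLittleO
    (isLittleO_of_tendsto' ((eventually_ne_atTop 0).mono fun x hx h ↦ absurd h hx) ?_)
  simp only [id, Real.sqrt_div_self]
  exact tendsto_inv_atTop_zero.comp Real.tendsto_sqrt_atTop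

theorem exists_eventually_mul_le_theta_sub_theta (ha : 0 < a) (hab : a < b) :
    ∃ c > 0, ∀ᶠ x : ℝ in atTop, c * x ≤ θ (b * x) - θ (a * x) := by
  have hb : 0 < b := ha.trans hab
  obtain ⟨c, hc, hψ⟩ := exists_eventually_mul_le_psi_sub_psi ha hab
  have hψθ := (isLittleO_psi_sub_theta_id.comp_tendsto
    (tendsto_id.const_mul_atTop hb)).bound (by positivity : 0 < c / (2 * b))
  refine ⟨c / 2, half_pos hc, ?_⟩
  filter_upwards [hψ, hψθ, eventually_ge_atTop 0] with x hx hxb hx0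
  have hdiff : ψ (b * x) - θ (b * x) ≤ c / 2 * x := by
    calc ψ (b * x) - θ (b * x) ≤ c / (2 * b) * |b * x| := (le_abs_self _).trans hxb
      _ = c / 2 * x := by
        rw [abs_of_nonneg (by positivity)]
        field
  linarith [Chebyshev.theta_le_psi (a * x)]

theorem theta_sub_theta_le_card_mul_log {x y : ℝ} (hx : 0 ≤ x) (hxy : x ≤ y) :
    θ y - θ x ≤ #{p ∈ Finset.Ioc ⌊x⌋₊ ⌊y⌋₊ | p.Prime} * Real.log y := by
  have hθ : θ y = θ x + ∑ p ∈ Finset.Ioc ⌊x⌋₊ ⌊y⌋₊ with p.Prime, Real.log p := by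
    simp only [Chebyshev.theta, Finset.sum_filter]
    rw [Finset.sum_Ioc_consecutive _ (Nat.zero_le _) (Nat.floor_le_floor hxy)]
  rw [hθ, add_sub_cancel_left, ← nsmul_eq_mul]
  refine Finset.sum_le_card_nsmul _ _ _ fun p hp ↦ ?_
  obtain ⟨hp, hprime⟩ := Finset.mem_filter.mp hp
  exact Real.log_le_log (mod_cast hprime.pos) ((mem_Ioc_floor_iff hx (hx.trans hxy)).mp hp).2

theorem tendsto_card_primes_Ioc_atTop (ha : 0 < a) (hab : a < b) :
    Tendsto (fun x : ℝ ↦ #{p ∈ Finset.Ioc ⌊a * x⌋₊ ⌊b * x⌋₊ | p.Prime}) atTop atTop := by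
  have hb : 0 < b := ha.trans hab
  obtain ⟨c, hc, hθ⟩ := exists_eventually_mul_le_theta_sub_theta ha hab
  refine tendsto_atTop.mpr fun m ↦ ?_
  have hlog := (Real.isLittleO_log_id_atTop.comp_tendsto
    (tendsto_id.const_mul_atTop hb)).bound (by positivity : 0 < c / (b * (m + 1)))
  filter_upwards [hθ, hlog, eventually_gt_atTop 0, eventually_gt_atTop (1 / b)]
    with x hx hxlog hx0 hxb
  have hlogpos : 0 < Real.log (b * x) := Real.log_pos ((div_lt_iff₀' hb).mp hxb)
  have hmlog : (m + 1) * Real.log (b * x) ≤ c * x := by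
    have : Real.log (b * x) ≤ c / (b * (m + 1)) * |b * x| := (le_abs_self _).trans hxlog
    rw [abs_of_pos (by positivity)] at this
    calc (m + 1) * Real.log (b * x) ≤ (m + 1) * (c / (b * (m + 1)) * (b * x)) := by gcongr
      _ = c * x := by field
  have hcard := theta_sub_theta_le_card_mul_log (by positivity)
    (mul_le_mul_of_nonneg_right hab.le hx0.le)
  exact_mod_cast (lt_add_one (m : ℝ)).le.trans
    (le_of_mul_le_mul_right (hmlog.trans (hx.trans hcard)) hlogpos)

theorem eventually_exists_prime_ne_prime_mem_Ioo (ha : 0 < a) (hab : a < b) :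
    ∀ᶠ x : ℝ in atTop, ∃ p q : ℕ, p.Prime ∧ q.Prime ∧ p ≠ q ∧
      (p : ℝ) ∈ Ioo (a * x) (b * x) ∧ (q : ℝ) ∈ Ioo (a * x) (b * x) := by
  obtain ⟨b', hab', hb'b⟩ := exists_between hab
  filter_upwards [(tendsto_card_primes_Ioc_atTop ha hab').eventually_gt_atTop 1,
    eventually_gt_atTop 0] with x hcard hx
  have hb' : 0 < b' := ha.trans hab'
  obtain ⟨p, hp, q, hq, hpq⟩ := Finset.one_lt_card.mp hcard
  simp only [Finset.mem_filter, mem_Ioc_floor_iff (mul_pos ha hx).le (mul_pos hb' hx).le] at hp hq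
  have hlt : b' * x < b * x := mul_lt_mul_of_pos_right hb'b hx
  exact ⟨p, q, hp.2, hq.2, hpq, ⟨hp.1.1, hp.1.2.trans_lt hlt⟩, hq.1.1, hq.1.2.trans_lt hlt⟩

end PrimesInIntervals

theorem fractional_theorem_general {k : ℝ} (hk : 1 < k) :
    ∃ N : ℕ, ∀ n : ℕ, N < n →
      ∃ p q : ℕ, p.Prime ∧ q.Prime ∧ p ≠ q ∧
        ((k - 1) / k) * n < (p : ℝ) ∧ (p : ℝ) < (k / (k - 1)) * n ∧
        ((k - 1) / k) * n < (q : ℝ) ∧ (q : ℝ) < (k / (k - 1)) * n := by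
  have hk1 : 0 < k - 1 := sub_pos.mpr hk
  have hk0 : 0 < k := one_pos.trans hk
  have hlt : (k - 1) / k < k / (k - 1) :=
    ((div_lt_one hk0).mpr (sub_one_lt k)).trans ((one_lt_div hk1).mpr (sub_one_lt k))
  obtain ⟨N, hN⟩ := eventually_atTop.mp <| tendsto_natCast_atTop_atTop.eventually
    (eventually_exists_prime_ne_prime_mem_Ioo (div_pos hk1 hk0) hlt)
  refine ⟨N, fun n hn ↦ ?_⟩
  obtain ⟨p, q, hp, hq, hpq, hpn, hqn⟩ := hN n hn.le
  exact ⟨p, q, hp, hq, hpq, hpn.1, hpn.2, hqn⟩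

/-- Fractional theorem: for every real `k ≥ 2` there is a constant `N` such
that every integer `n > N` admits two distinct primes `p, q` with
`((k-1)/k)·n < p, q < (k/(k-1))·n`. -/
theorem fractional_theorem :
    ∀ k : ℝ, 2 ≤ k → ∃ N : ℕ, ∀ n : ℕ, N < n →
      ∃ p q : ℕ, p.Prime ∧ q.Prime ∧ p ≠ q ∧
        ((k - 1) / k) * n < (p : ℝ) ∧ (p : ℝ) < (k / (k - 1)) * n ∧
        ((k - 1) / k) * n < (q : ℝ) ∧ (q : ℝ) < (k / (k - 1)) * n :=
  fun _ hk ↦ fractional_theorem_general (one_lt_two.trans_le hk)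
end

section
/- For every real number k ≥ 2 there exists a constant N such that for all consecutive primes p' < p with p' > N, the gap satisfies p - p' < min(p'/(k-1), p/k) (as real numbers). -/
/-!
A one-sided form of the Wiener–Ikehara argument. Let `f ≥ 0` have a Dirichlet series that becomes
continuous up to the line `re s = 1` after subtracting `A / (s - 1)`, for instance the von Mangoldt
function on a residue class. For `h` continuous with compact support,
`∑ f n / n ^ (1 + δ) * 𝓕 h (log n - t)` is the integral of a modulation of `h` against the
Dirichlet series on the line `re s = 1 + δ`; the pole contributes a quantity that tends to `A * h 0`
as `δ → 0` and then `t → ∞`, while the continuous part disappears by the Riemann–Lebesgue lemma. If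
`h 0 > 0` and `𝓕 h ≤ 0` outside `[-a, a]`, the terms with `|log n - t| ≥ a` only decrease the sum,
so `∑ f n / n` over the window `|log n - t| < a` is bounded below.

Such an `h` is obtained from the autoconvolution of an even bump, whose Fourier transform is the
square of a real function, by applying a differential operator with Fourier symbol `b² - y²`.

The prime powers that are not prime contribute a convergent series to `∑ Λ n / n`, so every window
`(x, c x)` with `c > 1` and `x` large contains a prime; `c = k / (k - 1)` gives the gap bound.
-/

open Complex Filter FourierTransform MeasureTheory Topology
open scoped ContDiff Convolution Real SchwartzMap

section Fourier

variable {E : Type*} [NormedAddCommGroup E] [NormedSpace ℂ E]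

lemma fourier_comp_mul_left (f : ℝ → E) {l : ℝ} (hl : l ≠ 0) (y : ℝ) :
    𝓕 (fun x ↦ f (l * x)) y = |l⁻¹| • 𝓕 f (y / l) := by
  rw [Real.fourier_real_eq, Real.fourier_real_eq, ← Measure.integral_comp_mul_left]
  congr! 5 with x
  field_simp

lemma fourier_fourierChar_smul (f : ℝ → E) (t y : ℝ) :
    𝓕 (fun x ↦ 𝐞 (x * t) • f x) y = 𝓕 f (y - t) := by
  simp_rw [Real.fourier_real_eq, smul_smul, ← AddChar.map_add_eq_mul]
  congr! 4 with x
  ring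

lemma integral_fourier [CompleteSpace E] {f : ℝ → E} (hf : Continuous f)
    (hfi : Integrable f) (hfi' : Integrable (𝓕 f)) :
    ∫ y, 𝓕 f y = f 0 := by
  simpa [Real.fourierInv_eq] using congrFun (hf.fourierInv_fourier_eq hfi hfi') 0

lemma conj_fourier_of_even {φ : ℝ → ℝ} (hφ : φ.Even) (y : ℝ) :
    starRingEnd ℂ (𝓕 (fun x ↦ (φ x : ℂ)) y) = 𝓕 (fun x ↦ (φ x : ℂ)) y := by
  calc starRingEnd ℂ (𝓕 (fun x ↦ (φ x : ℂ)) y)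
    _ = 𝓕⁻ (fun x ↦ (φ x : ℂ)) y := by
      simp [Real.fourier_eq, Real.fourierInv_eq, ← integral_conj, Circle.smul_def,
        AddChar.map_neg_eq_inv]
    _ = 𝓕 (fun x ↦ (φ x : ℂ)) y := by
      simp_rw [Real.fourierInv_eq_fourier_comp_neg, hφ _]

lemma fourier_convolution_self_re_nonneg {φ : ℝ → ℝ} (hφ : φ.Even)
    (hφi : Integrable fun x ↦ (φ x : ℂ)) (y : ℝ) :
    0 ≤ (𝓕 ((fun x ↦ (φ x : ℂ)) ⋆[ContinuousLinearMap.mul ℂ ℂ] fun x ↦ (φ x : ℂ)) y).re := by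
  rw [Real.fourier_mul_convolution_eq hφi hφi, mul_re,
    conj_eq_iff_im.mp (conj_fourier_of_even hφ y), mul_zero, sub_zero]
  exact mul_self_nonneg _

lemma exists_schwartzMap_fourier_re_nonneg : ∃ c : 𝓢(ℝ, ℂ), HasCompactSupport c ∧
    (∀ y, 0 ≤ (𝓕 (c : ℝ → ℂ) y).re) ∧ 0 < (c 0).re := by
  let φ : ContDiffBump (0 : ℝ) := ⟨1, 2, one_pos, one_lt_two⟩
  let f : ℝ → ℂ := fun x ↦ (φ x : ℂ)
  have hf : HasCompactSupport f := φ.hasCompactSupport.comp_left ofReal_zero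
  have hf_smooth : ContDiff ℝ ∞ f := ofRealCLM.contDiff.comp φ.contDiff
  have hfi : Integrable f := hf_smooth.continuous.integrable_of_hasCompactSupport hf
  let c : ℝ → ℂ := f ⋆[ContinuousLinearMap.mul ℂ ℂ] f
  have hc : HasCompactSupport c := hf.convolution _ hf
  have hc_smooth : ContDiff ℝ ∞ c :=
    hf.contDiff_convolution_right (ContinuousLinearMap.mul ℝ ℂ) hfi.locallyIntegrable hf_smooth
  refine ⟨hc.toSchwartzMap hc_smooth, hc,
    fourier_convolution_self_re_nonneg (fun x ↦ φ.neg x) hfi, ?_⟩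
  have hc_zero : c 0 = ((∫ x, φ x ^ 2 : ℝ) : ℂ) := by
    simp [c, f, convolution_def, φ.neg, sq, ← integral_complex_ofReal]
  change 0 < (c 0).re
  rw [hc_zero, ofReal_re]
  refine Continuous.integral_pos_of_hasCompactSupport_nonneg_nonzero (x := 0)
    (φ.continuous.pow 2) (φ.hasCompactSupport.comp_left (zero_pow two_ne_zero))
    (fun x ↦ sq_nonneg _) ?_
  simp [φ.one_of_mem_closedBall (x := 0) (by simp [φ])]

open SchwartzMap

lemma fourier_derivCLM (u : 𝓢(ℝ, E)) (y : ℝ) :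
    𝓕 (derivCLM ℂ E u) y = (2 * π * I * y) • 𝓕 u y := by
  have h : (derivCLM ℂ E u : ℝ → E) = deriv u := rfl
  simp_rw [fourier_coe, h]
  exact congrFun (Real.fourier_deriv u.integrable u.differentiable
    (derivCLM ℂ E u).integrable) y

/-- The Helmholtz operator `b² + Δ / (2π)²` on Schwartz functions, normalised so that its Fourier
symbol is `b² - y²`; it turns a positive Fourier transform into one that is nonpositive outside
`[-b, b]`. -/
noncomputable def helmholtz (b : ℝ) (c : 𝓢(ℝ, E)) : 𝓢(ℝ, E) :=
  (b : ℂ) ^ 2 • c + ((2 * π : ℂ) ^ 2)⁻¹ • derivCLM ℂ E (derivCLM ℂ E c)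

lemma fourier_helmholtz (b : ℝ) (c : 𝓢(ℝ, E)) (y : ℝ) :
    𝓕 (helmholtz b c) y = ((b ^ 2 - y ^ 2 : ℝ) : ℂ) • 𝓕 c y := by
  rw [helmholtz, FourierTransform.fourier_add, FourierTransform.fourier_smul,
    FourierTransform.fourier_smul]
  simp only [add_apply, smul_apply, fourier_derivCLM, smul_smul, ← add_smul]
  congr 1
  have : (π : ℂ) ≠ 0 := by exact_mod_cast Real.pi_ne_zero
  push_cast
  field_simp
  linear_combination y ^ 2 * I_sq

lemma hasCompactSupport_helmholtz (b : ℝ) {c : 𝓢(ℝ, E)} (hc : HasCompactSupport c) :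
    HasCompactSupport (helmholtz b c) := by
  have hd : HasCompactSupport (derivCLM ℂ E (derivCLM ℂ E c)) :=
    hc.of_isClosed_subset (isClosed_tsupport _)
      ((tsupport_derivCLM_subset ℂ _).trans (tsupport_derivCLM_subset ℂ c))
  exact hc.smul_left.add hd.smul_left

lemma exists_schwartzMap_fourier_re_nonpos :
    ∃ b > 0, ∃ h : 𝓢(ℝ, ℂ), HasCompactSupport h ∧
      (∀ y, b ≤ |y| → (𝓕 (h : ℝ → ℂ) y).re ≤ 0) ∧ 0 < (h 0).re := by
  obtain ⟨c, hc, hc_nonneg, hc_zero⟩ := exists_schwartzMap_fourier_re_nonneg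
  set d : ℝ := (((2 * π : ℂ) ^ 2)⁻¹ • derivCLM ℂ ℂ (derivCLM ℂ ℂ c) 0).re
  set b : ℝ := 1 + |d| / (c 0).re
  have hb : 1 ≤ b := le_add_of_nonneg_right (by positivity)
  refine ⟨b, by positivity, helmholtz b c, hasCompactSupport_helmholtz b hc, fun y hy ↦ ?_, ?_⟩
  · rw [← fourier_coe, fourier_helmholtz, smul_eq_mul, re_ofReal_mul]
    exact mul_nonpos_of_nonpos_of_nonneg
      (sub_nonpos.mpr (sq_le_sq.mpr (by rwa [abs_of_nonneg (by positivity)]))) (hc_nonneg y)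
  · have hre : (helmholtz b c 0).re = b ^ 2 * (c 0).re + d := by
      rw [← re_ofReal_mul]; simp [helmholtz, d]
    calc 0 < (c 0).re := hc_zero
      _ ≤ (c 0).re + (|d| + d) := le_add_of_nonneg_right (by linarith [neg_abs_le d])
      _ = b * (c 0).re + d := by simp only [b]; field_simp; ring
      _ ≤ b ^ 2 * (c 0).re + d := by gcongr; exact le_self_pow₀ hb two_ne_zero
      _ = (helmholtz b c 0).re := hre.symm

lemma exists_fourier_re_nonpos_of_le_abs {a : ℝ} (ha : 0 < a) :
    ∃ h : ℝ → ℂ, Continuous h ∧ HasCompactSupport h ∧ Integrable (𝓕 h) ∧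
      (∀ y, a ≤ |y| → (𝓕 h y).re ≤ 0) ∧ 0 < (h 0).re := by
  obtain ⟨b, hb, h, hh, h_nonpos, h_zero⟩ := exists_schwartzMap_fourier_re_nonpos
  have hl : a / b ≠ 0 := (div_pos ha hb).ne'
  have hF (y) := fourier_comp_mul_left h hl y
  refine ⟨fun x ↦ h (a / b * x), h.continuous.comp (by fun_prop),
    hh.comp_homeomorph (Homeomorph.mulLeft₀ _ hl), ?_, fun y hy ↦ ?_, by simpa using h_zero⟩
  · rw [funext hF]
    exact ((𝓕 h).integrable.comp_div hl).smul _
  · rw [hF, smul_re]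
    refine smul_nonpos_of_nonneg_of_nonpos (abs_nonneg _) (h_nonpos _ ?_)
    rw [abs_div, abs_of_pos (div_pos ha hb), le_div_iff₀ (div_pos ha hb)]
    rwa [mul_div_cancel₀ _ hb.ne']

end Fourier

section DirichletSeries

lemma lSeriesTerm_add_two_pi_mul_I {f : ℕ → ℂ} (s : ℂ) (u : ℝ) (n : ℕ) :
    LSeries.term f (s + 2 * π * u * I) n = 𝐞 (-(u * Real.log n)) • LSeries.term f s n := by
  rcases eq_or_ne n 0 with rfl | hn
  · simp
  have hn' : (n : ℂ) ≠ 0 := by exact_mod_cast hn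
  rw [LSeries.term_of_ne_zero hn, LSeries.term_of_ne_zero hn, cpow_add _ _ hn', Circle.smul_def,
    Real.fourierChar_apply, cpow_def_of_ne_zero hn' (2 * π * u * I), natCast_log.symm, ← div_div,
    div_eq_mul_inv _ (cexp _), ← Complex.exp_neg, smul_eq_mul, mul_comm]
  push_cast
  ring_nf

lemma hasSum_lSeriesTerm_mul_fourier {f : ℕ → ℂ} {s : ℂ} (hf : LSeriesSummable f s) {h : ℝ → ℂ}
    (hh : Integrable h) :
    HasSum (fun n ↦ LSeries.term f s n * 𝓕 h (Real.log n))
      (∫ u, h u * LSeries f (s + 2 * π * u * I)) := by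
  have hterm (n : ℕ) : LSeries.term f s n * 𝓕 h (Real.log n) =
      ∫ u, h u * LSeries.term f (s + 2 * π * u * I) n := by
    simp_rw [Real.fourier_real_eq, ← integral_const_mul, lSeriesTerm_add_two_pi_mul_I,
      mul_smul_comm, mul_comm]
  have hnorm (n : ℕ) (u : ℝ) : ‖h u * LSeries.term f (s + 2 * π * u * I) n‖ =
      ‖h u‖ * ‖LSeries.term f s n‖ := by
    rw [norm_mul, lSeriesTerm_add_two_pi_mul_I, Circle.norm_smul]
  simp_rw [hterm, LSeries, ← tsum_mul_left]
  refine hasSum_integral_of_summable_integral_norm (fun n ↦ ?_) ?_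
  · simp_rw [lSeriesTerm_add_two_pi_mul_I, mul_smul_comm, ← smul_mul_assoc]
    have hconv := (Real.fourierIntegral_convergent_iff (Real.log n)).2 hh
    exact (hconv.mul_const (LSeries.term f s n)).congr (.of_forall fun u ↦ by simp [mul_comm u])
  · simp_rw [hnorm, integral_mul_const]
    exact hf.norm.mul_left _

lemma fourier_indicator_Ioi_exp {s : ℂ} (hs : 0 < s.re) (u : ℝ) :
    𝓕 ((Set.Ioi (0 : ℝ)).indicator fun v ↦ cexp (-s * v)) u = (s + 2 * π * u * I)⁻¹ := by
  have hexp (v : ℝ) : 𝐞 (-(v * u)) •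
      (Set.Ioi (0 : ℝ)).indicator (fun v : ℝ ↦ cexp (-s * v)) v =
      (Set.Ioi (0 : ℝ)).indicator (fun v : ℝ ↦ cexp (-(s + 2 * π * u * I) * v)) v := by
    by_cases hv : v ∈ Set.Ioi (0 : ℝ)
    · rw [Set.indicator_of_mem hv, Set.indicator_of_mem hv, Circle.smul_def, smul_eq_mul,
        Real.fourierChar_apply, ← Complex.exp_add]
      push_cast
      ring_nf
    · rw [Set.indicator_of_notMem hv, Set.indicator_of_notMem hv, smul_zero]
  simp_rw [Real.fourier_real_eq, hexp]
  rw [integral_indicator measurableSet_Ioi, integral_exp_mul_complex_Ioi (by simpa using hs)]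
  simp only [ofReal_zero, mul_zero, Complex.exp_zero, neg_div_neg_eq, one_div]

lemma setIntegral_Ioi_exp_mul_fourier {s : ℂ} (hs : 0 < s.re) {h : ℝ → ℂ} (hh : Integrable h) :
    ∫ v in Set.Ioi (0 : ℝ), cexp (-s * v) * 𝓕 h v = ∫ u, h u / (s + 2 * π * u * I) := by
  let w : ℝ → ℂ := (Set.Ioi (0 : ℝ)).indicator fun v ↦ cexp (-s * v)
  have hw : Integrable w :=
    (integrable_indicator_iff measurableSet_Ioi).2 (integrableOn_exp_mul_complex_Ioi (by simpa) 0)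
  calc ∫ v in Set.Ioi (0 : ℝ), cexp (-s * v) * 𝓕 h v
    _ = ∫ v, w v • 𝓕 h v := by
      simp_rw [w, ← integral_indicator measurableSet_Ioi, smul_eq_mul, Set.indicator_mul_left]
    _ = ∫ u, 𝓕 w u • h u := by
      simpa using! (VectorFourier.integral_fourierIntegral_smul_eq_flip (L := innerₗ ℝ)
        Real.continuous_fourierChar continuous_inner hw hh).symm
    _ = ∫ u, h u / (s + 2 * π * u * I) := by
      simp_rw [w, fourier_indicator_Ioi_exp hs, smul_eq_mul, div_eq_inv_mul]


/-- The hypotheses of the Wiener–Ikehara theorem for a nonnegative sequence `f`: its Dirichlet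
series converges absolutely for `re s > 1`, and after removing a simple pole of residue `A` at `1`
it extends continuously to `re s ≥ 1`. The extension is the restriction of the total function `G`,
whose values on `re s < 1` are irrelevant. -/
structure IsWienerIkehara (f : ℕ → ℝ) (A : ℝ) (G : ℂ → ℂ) : Prop where
  nonneg : ∀ n, 0 ≤ f n
  lSeriesSummable : ∀ s : ℂ, 1 < s.re → LSeriesSummable (fun n ↦ (f n : ℂ)) s
  continuousOn : ContinuousOn G {s | 1 ≤ s.re}
  eqOn : Set.EqOn G (fun s ↦ LSeries (fun n ↦ (f n : ℂ)) s - A / (s - 1)) {s | 1 < s.re}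

lemma tendsto_setIntegral_Ioi_exp_mul {F : ℝ → ℂ} (hF : IntegrableOn F (Set.Ioi 0)) :
    Tendsto (fun δ : ℝ ↦ ∫ v in Set.Ioi (0 : ℝ), cexp (-δ * v) * F v) (𝓝[>] 0)
      (𝓝 (∫ v in Set.Ioi (0 : ℝ), F v)) := by
  refine tendsto_integral_filter_of_dominated_convergence (fun v ↦ ‖F v‖)
    (.of_forall fun δ ↦ .mul (by fun_prop) hF.aestronglyMeasurable) ?_ hF.norm
    (.of_forall fun v ↦ ?_)
  · filter_upwards [self_mem_nhdsWithin] with δ hδ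
    refine (ae_restrict_iff' measurableSet_Ioi).2 (.of_forall fun v hv ↦ ?_)
    have : ‖cexp (-δ * v)‖ ≤ 1 := by
      simpa [norm_exp] using mul_nonneg (le_of_lt hδ) (le_of_lt hv)
    simpa using mul_le_mul_of_nonneg_right this (norm_nonneg (F v))
  · have : Continuous fun δ : ℝ ↦ cexp (-δ * v) * F v := by fun_prop
    simpa using (this.tendsto 0).mono_left nhdsWithin_le_nhds

lemma tendsto_integral_mul_vertical {G : ℂ → ℂ} (hG : ContinuousOn G {s | 1 ≤ s.re}) {h : ℝ → ℂ}
    (hh : Continuous h) (hh_supp : HasCompactSupport h) :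
    Tendsto (fun δ : ℝ ↦ ∫ u, h u * G (1 + δ + 2 * π * u * I)) (𝓝[>] 0)
      (𝓝 (∫ u, h u * G (1 + 2 * π * u * I))) := by
  have hcont : ContinuousOn (fun δ : ℝ ↦ ∫ u, h u * G (1 + δ + 2 * π * u * I)) (Set.Ici 0) := by
    refine continuousOn_integral_of_compact_support hh_supp ?_ fun δ u _ hu ↦ ?_
    · refine (hh.comp continuous_snd).continuousOn.mul (hG.comp (by fun_prop) fun p hp ↦ ?_)
      simpa using hp.1
    · simp [image_eq_zero_of_notMem_tsupport hu]
  simpa using (hcont 0 Set.self_mem_Ici).tendsto.mono_left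
    (nhdsWithin_mono _ Set.Ioi_subset_Ici_self)

lemma tendsto_lSeriesTerm_one_add (f : ℕ → ℂ) (n : ℕ) :
    Tendsto (fun δ : ℝ ↦ LSeries.term f (1 + δ) n) (𝓝[>] 0) (𝓝 (f n / n)) := by
  have hone : LSeries.term f 1 n = f n / n := by
    rcases eq_or_ne n 0 with rfl | hn
    · simp
    · simp [LSeries.term_of_ne_zero hn]
  have hadd : Tendsto (fun δ : ℝ ↦ (1 + δ : ℂ)) (𝓝[>] 0) (𝓝 1) :=
    ((by fun_prop : Continuous fun δ : ℝ ↦ (1 + δ : ℂ)).tendsto' 0 1 (by simp)).mono_left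
      nhdsWithin_le_nhds
  exact hone ▸ (LSeries.hasDerivAt_term f n 1).continuousAt.tendsto.comp hadd

lemma tendsto_setIntegral_Ioi_comp_sub {E : Type*} [NormedAddCommGroup E] [NormedSpace ℝ E]
    {F : ℝ → E} (hF : Integrable F) :
    Tendsto (fun t ↦ ∫ v in Set.Ioi 0, F (v - t)) atTop (𝓝 (∫ v, F v)) := by
  have hshift (t : ℝ) : ∫ v in Set.Ioi 0, F (v - t) = ∫ v in Set.Ioi (-t), F v := by
    simpa using (measurePreserving_sub_right volume t).setIntegral_preimage_emb
      (Homeomorph.subRight t).measurableEmbedding F (Set.Ioi (-t))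
  simp_rw [hshift]
  exact (aecover_Ioi tendsto_neg_atTop_atBot).integral_tendsto_of_countably_generated hF

lemma half_log_le_abs_of_notMem_Ioo {c x y : ℝ} (hc : 0 < c) (hx : 0 < x) (hy : 0 < y)
    (hxy : y ∉ Set.Ioo x (c * x)) :
    Real.log c / 2 ≤ |Real.log y - (Real.log x + Real.log c / 2)| := by
  rw [Set.mem_Ioo, not_and_or, not_lt, not_lt] at hxy
  rcases hxy with h | h
  · have := Real.log_le_log hy h
    exact le_abs.2 (.inr (by linarith))
  · have := Real.log_le_log (mul_pos hc hx) h
    rw [Real.log_mul hc.ne' hx.ne'] at this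
    exact le_abs.2 (.inl (by linarith))

lemma mem_Ioo_floor_ceil {x y : ℝ} (hx : 0 ≤ x) {n : ℕ} :
    n ∈ Finset.Ioo ⌊x⌋₊ ⌈y⌉₊ ↔ (n : ℝ) ∈ Set.Ioo x y := by
  rw [Finset.mem_Ioo, Set.mem_Ioo, Nat.floor_lt hx, Nat.lt_ceil]

namespace IsWienerIkehara

variable {f : ℕ → ℝ} {A : ℝ} {G : ℂ → ℂ} {h : ℝ → ℂ}

lemma hasSum_term_mul_fourier (hf : IsWienerIkehara f A G) (hh : Continuous h)
    (hh_supp : HasCompactSupport h) {δ : ℝ} (hδ : 0 < δ) :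
    HasSum (fun n ↦ LSeries.term (fun n ↦ (f n : ℂ)) (1 + δ) n * 𝓕 h (Real.log n))
      ((∫ u, h u * G (1 + δ + 2 * π * u * I)) +
        A * ∫ v in Set.Ioi (0 : ℝ), cexp (-δ * v) * 𝓕 h v) := by
  have hhi : Integrable h := hh.integrable_of_hasCompactSupport hh_supp
  have hre (u : ℝ) : 1 < (1 + δ + 2 * π * u * I : ℂ).re := by simpa
  have hpole (u : ℝ) : (δ + 2 * π * u * I : ℂ) ≠ 0 := fun h0 ↦
    hδ.ne' (by simpa using congrArg re h0)
  have hG_cont : Continuous fun u : ℝ ↦ G (1 + δ + 2 * π * u * I) :=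
    hf.continuousOn.comp_continuous (by fun_prop) fun u ↦ (hre u).le
  have hG_int : Integrable fun u : ℝ ↦ h u * G (1 + δ + 2 * π * u * I) :=
    (hh.mul hG_cont).integrable_of_hasCompactSupport hh_supp.mul_right
  have hpole_int : Integrable fun u : ℝ ↦ h u / (δ + 2 * π * u * I) := by
    refine Continuous.integrable_of_hasCompactSupport (hh.div (by fun_prop) hpole) ?_
    simp_rw [div_eq_mul_inv]
    exact hh_supp.mul_right
  convert hasSum_lSeriesTerm_mul_fourier (hf.lSeriesSummable (1 + δ) (by simpa)) hhi using 1
  rw [setIntegral_Ioi_exp_mul_fourier (by simpa) hhi, ← integral_const_mul,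
    ← integral_add hG_int (hpole_int.const_mul _)]
  congr with u
  rw [hf.eqOn (hre u)]
  ring

lemma re_integral_add_le_sum (hf : IsWienerIkehara f A G) (hh : Continuous h)
    (hh_supp : HasCompactSupport h) (hh_fourier : Integrable (𝓕 h)) {S : Finset ℕ}
    (hS : ∀ n ∉ S, n ≠ 0 → (𝓕 h (Real.log n)).re ≤ 0) :
    ((∫ u, h u * G (1 + 2 * π * u * I)) + A * ∫ v in Set.Ioi (0 : ℝ), 𝓕 h v).re ≤
      ∑ n ∈ S, f n / n * (𝓕 h (Real.log n)).re := by
  -- The terms outside `S` are dropped before `δ → 0`: the full series may diverge at `s = 1`.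
  have hright : Tendsto (fun δ : ℝ ↦ ∑ n ∈ S, (LSeries.term (fun n ↦ (f n : ℂ)) (1 + δ) n *
      𝓕 h (Real.log n)).re) (𝓝[>] 0) (𝓝 (∑ n ∈ S, f n / n * (𝓕 h (Real.log n)).re)) := by
    refine tendsto_finsetSum S fun n _ ↦ ?_
    rw [← re_ofReal_mul, ofReal_div, ofReal_natCast]
    exact (continuous_re.tendsto _).comp ((tendsto_lSeriesTerm_one_add _ n).mul_const _)
  have hleft := (tendsto_integral_mul_vertical hf.continuousOn hh hh_supp).add
    ((tendsto_setIntegral_Ioi_exp_mul hh_fourier.integrableOn).const_mul (A : ℂ))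
  refine le_of_tendsto_of_tendsto ((continuous_re.tendsto _).comp hleft) hright ?_
  filter_upwards [self_mem_nhdsWithin] with δ hδ
  have hsum := hasSum_re (hf.hasSum_term_mul_fourier hh hh_supp hδ)
  refine neg_le_neg_iff.mp ((Finset.sum_neg_distrib _).symm.trans_le
    (sum_le_hasSum S (fun n hn ↦ neg_nonneg.2 ?_) hsum.neg))
  rcases eq_or_ne n 0 with rfl | hn0
  · simp
  obtain ⟨hre, him⟩ := nonneg_iff.1 (LSeries.term_nonneg (a := fun n ↦ (f n : ℂ)) (n := n)
    (zero_le_real.2 (hf.nonneg n)) (1 + δ))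
  push_cast at hre him
  rw [mul_re, ← him, zero_mul, sub_zero]
  exact mul_nonpos_of_nonneg_of_nonpos hre (hS n hn hn0)

lemma eventually_lt_sum (hf : IsWienerIkehara f A G) (hh : Continuous h)
    (hh_supp : HasCompactSupport h) (hh_fourier : Integrable (𝓕 h)) {B : ℝ}
    (hB : B < A * (h 0).re) :
    ∀ᶠ t in atTop, ∀ S : Finset ℕ, (∀ n ∉ S, n ≠ 0 → (𝓕 h (Real.log n - t)).re ≤ 0) →
      B < ∑ n ∈ S, f n / n * (𝓕 h (Real.log n - t)).re := by
  let g (t u : ℝ) : ℂ := 𝐞 (u * t) • h u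
  have hg_fourier (t : ℝ) : 𝓕 (g t) = fun y ↦ 𝓕 h (y - t) := funext (fourier_fourierChar_smul h t)
  have hGint : Tendsto (fun t ↦ ∫ u, g t u * G (1 + 2 * π * u * I)) atTop (𝓝 0) := by
    have hRL := (Real.zero_at_infty_fourier fun u ↦ h u * G (1 + 2 * π * u * I)).comp
      (tendsto_neg_atTop_atBot.mono_right atBot_le_cocompact)
    simpa [Function.comp_def, Real.fourier_real_eq, g, smul_mul_assoc] using hRL
  have hlim := hGint.add ((tendsto_setIntegral_Ioi_comp_sub hh_fourier).const_mul (A : ℂ))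
  rw [zero_add, integral_fourier hh (hh.integrable_of_hasCompactSupport hh_supp) hh_fourier] at hlim
  have hlim_re := (continuous_re.tendsto _).comp hlim
  rw [re_ofReal_mul] at hlim_re
  filter_upwards [hlim_re.eventually_const_lt hB] with t ht S hS
  refine ht.trans_le ?_
  have hg_int : Integrable (𝓕 (g t)) := hg_fourier t ▸ hh_fourier.comp_sub_right t
  simpa [hg_fourier] using hf.re_integral_add_le_sum (h := g t) (by fun_prop) hh_supp.smul_left
    hg_int (S := S) (by simpa [hg_fourier] using hS)

lemma exists_pos_eventually_le_sum_Ioo (hf : IsWienerIkehara f A G) (hA : 0 < A) {c : ℝ}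
    (hc : 1 < c) :
    ∃ δ > 0, ∀ᶠ x : ℝ in atTop, δ ≤ ∑ n ∈ Finset.Ioo ⌊x⌋₊ ⌈c * x⌉₊, f n / n := by
  obtain ⟨h, hh, hh_supp, hh_fourier, h_nonpos, h_zero⟩ :=
    exists_fourier_re_nonpos_of_le_abs (half_pos (Real.log_pos hc))
  obtain ⟨B, hB, hBA⟩ := exists_between (mul_pos hA h_zero)
  set M : ℝ := ∫ u, ‖h u‖
  have hM : 0 < M + 1 := add_pos_of_nonneg_of_pos (integral_nonneg fun _ ↦ norm_nonneg _) one_pos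
  have hM_bound (y : ℝ) : (𝓕 h y).re ≤ M + 1 :=
    (re_le_norm _).trans ((VectorFourier.norm_fourierIntegral_le_integral_norm _ _ _ _ _).trans
      (le_add_of_nonneg_right zero_le_one))
  have hshift : Tendsto (fun x ↦ Real.log x + Real.log c / 2) atTop atTop :=
    tendsto_atTop_add_const_right _ _ Real.tendsto_log_atTop
  refine ⟨B / (M + 1), div_pos hB hM, ?_⟩
  filter_upwards [hshift.eventually (hf.eventually_lt_sum hh hh_supp hh_fourier hBA),
    eventually_gt_atTop 0] with x hx hx0
  rw [div_le_iff₀ hM, Finset.sum_mul]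
  refine (hx _ fun n hn hn0 ↦ h_nonpos _ ?_).le.trans (Finset.sum_le_sum fun n _ ↦
    mul_le_mul_of_nonneg_left (hM_bound _) (div_nonneg (hf.nonneg n) n.cast_nonneg))
  rw [mem_Ioo_floor_ceil hx0.le] at hn
  exact half_log_le_abs_of_notMem_Ioo (by positivity) hx0 (by positivity) hn

end IsWienerIkehara

end DirichletSeries

section Primes

open ArithmeticFunction.vonMangoldt

variable {q : ℕ} [NeZero q] {a : ZMod q}

lemma isWienerIkehara_residueClass (ha : IsUnit a) :
    IsWienerIkehara (residueClass a) (q.totient : ℝ)⁻¹ (LFunctionResidueClassAux a) where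
  nonneg n := residueClass_nonneg a n
  lSeriesSummable s hs := LSeriesSummable_of_abscissaOfAbsConv_lt_re
    ((abscissaOfAbsConv_residueClass_le_one a).trans_lt (by exact_mod_cast hs))
  continuousOn := continuousOn_LFunctionResidueClassAux a
  eqOn := by simpa using eqOn_LFunctionResidueClassAux ha

lemma tendsto_sum_Ioo {ι E : Type*} [AddCommGroup E] [TopologicalSpace E]
    [IsTopologicalAddGroup E] {F : ℕ → E} (hF : Summable F) {l : Filter ι} {m : ι → ℕ}
    (hm : Tendsto m l atTop) (M : ι → ℕ) :
    Tendsto (fun i ↦ ∑ n ∈ Finset.Ioo (m i) (M i), F n) l (𝓝 0) := by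
  intro e he
  rw [mem_map]
  obtain ⟨s, hs⟩ := hF.vanishing he
  filter_upwards [hm.eventually_ge_atTop (s.sup id)] with i hi
  refine hs _ (Finset.disjoint_left.2 fun n hn hns ↦ ?_)
  exact ((Finset.le_sup (f := id) hns).trans hi).not_gt (Finset.mem_Ioo.1 hn).1

lemma eventually_exists_prime_mem_Ioo (ha : IsUnit a) {c : ℝ} (hc : 1 < c) :
    ∀ᶠ x : ℝ in atTop, ∃ r : ℕ, r.Prime ∧ (r : ZMod q) = a ∧ (r : ℝ) ∈ Set.Ioo x (c * x) := by
  obtain ⟨δ, hδ, hδ_le⟩ := (isWienerIkehara_residueClass ha).exists_pos_eventually_le_sum_Ioo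
    (by simpa using Nat.totient_pos.2 (NeZero.pos q)) hc
  have hnonprime := tendsto_sum_Ioo (summable_residueClass_non_primes_div a)
    tendsto_nat_floor_atTop fun x ↦ ⌈c * x⌉₊
  filter_upwards [hδ_le, hnonprime.eventually_lt_const hδ, eventually_ge_atTop 0] with x hx hx' hx0
  by_contra! hno
  refine (hx.trans_eq (Finset.sum_congr rfl fun n hn ↦ ?_)).not_gt hx'
  rw [mem_Ioo_floor_ceil hx0] at hn
  split_ifs with hp
  · have hna : n ∉ {n : ℕ | (n : ZMod q) = a} := fun hna ↦ hno n hp hna hn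
    rw [residueClass, Set.indicator_of_notMem hna]
  · rfl

theorem gap_bound_fractional_general (ha : IsUnit a) :
    ∀ k : ℝ, 1 < k → ∃ N : ℕ, ∀ x y : ℝ,
      (∀ r : ℕ, r.Prime → (r : ZMod q) = a → ¬(x < r ∧ r < y)) → N < x →
        y - x < min (x / (k - 1)) (y / k) := by
  intro k hk
  have hk' : 0 < k - 1 := sub_pos.2 hk
  have hc : 1 < k / (k - 1) := (one_lt_div hk').2 (sub_one_lt k)
  obtain ⟨X, hX⟩ := eventually_atTop.1 (eventually_exists_prime_mem_Ioo ha hc)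
  refine ⟨⌈X⌉₊, fun x y hgap hx ↦ ?_⟩
  obtain ⟨r, hr, hra, hxr, hrk⟩ := hX x ((Nat.le_ceil X).trans hx.le)
  have hy : y ≤ r := not_lt.1 fun hry ↦ hgap r hr hra ⟨hxr, hry⟩
  have hkey : y * (k - 1) < k * x := by
    rw [div_mul_eq_mul_div, lt_div_iff₀ hk'] at hrk
    exact (mul_le_mul_of_nonneg_right hy hk'.le).trans_lt hrk
  rw [lt_min_iff, lt_div_iff₀ hk', lt_div_iff₀ (by positivity)]
  constructor <;> linarith

end Primes

/-- For every real `k ≥ 2` there is a constant `N` such that for all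
consecutive primes `p' < p` with `p' > N`, the gap satisfies
`p - p' < min (p'/(k-1)) (p/k)`. -/
theorem gap_bound_fractional :
    ∀ k : ℝ, 2 ≤ k → ∃ N : ℕ, ∀ p' p : ℕ, p'.Prime → p.Prime → p' < p →
      (∀ r : ℕ, r.Prime → ¬(p' < r ∧ r < p)) → N < p' →
      (p : ℝ) - (p' : ℝ) < min ((p' : ℝ) / (k - 1)) ((p : ℝ) / k) := by
  intro k hk
  obtain ⟨N, hN⟩ := gap_bound_fractional_general (a := (1 : ZMod 1)) isUnit_one k (by linarith)
  exact ⟨N, fun p' p _ _ _ hgap hNp ↦ hN p' p (fun r hr _ ↦ mod_cast hgap r hr) (mod_cast hNp)⟩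
end
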